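/- arXiv:1701.08949 — 2 statements merged into one kernel-verified Lean document; each statement's English description precedes it below -/
import Mathlib

section
/- Let A be an algebra possessing a Mal'cev term and suppose (α,β) is an n-supernilpotent interval in the congruence lattice of A. Then for every covering pair γ ≺ σ with α ≤ γ ≺ σ ≤ β, the interval (γ,σ) is abelian, i.e., C(σ,σ;γ) holds in A. -/
set_option autoImplicit false

namespace UA

/-- A signature: a type of operation symbols, each with a finite arity. -/
structure Signature : Type 1 where
  ops : Type
  arity : ops → ℕ

/-- An algebra for a signature: a carrier set together with an interpretation
of every operation symbol. -/
structure Algebra (σ : Signature) : Type 1 where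
  carrier : Type
  interp : (o : σ.ops) → (Fin (σ.arity o) → carrier) → carrier

variable {σ : Signature}

/-- A congruence of an algebra: an equivalence relation compatible with all
basic operations. -/
structure Con (A : Algebra σ) : Type where
  r : A.carrier → A.carrier → Prop
  refl : ∀ a, r a a
  symm : ∀ {a b}, r a b → r b a
  trans : ∀ {a b c}, r a b → r b c → r a c
  compat : ∀ (o : σ.ops) (x y : Fin (σ.arity o) → A.carrier),
      (∀ i, r (x i) (y i)) → r (A.interp o x) (A.interp o y)

namespace Con

variable {A : Algebra σ}

instance : LE (Con A) := ⟨fun c d => ∀ a b : A.carrier, c.r a b → d.r a b⟩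
instance : LT (Con A) := ⟨fun c d => c ≤ d ∧ ¬ d ≤ c⟩

/-- The total congruence `1_A`. -/
def top : Con A where
  r := fun _ _ => True
  refl := fun _ => trivial
  symm := fun _ => trivial
  trans := fun _ _ => trivial
  compat := fun _ _ _ _ => trivial

/-- The identity congruence `0_A`. -/
def bot : Con A where
  r := fun a b => a = b
  refl := fun _ => rfl
  symm := fun h => h.symm
  trans := fun h h' => h.trans h'
  compat := fun o _ _ h => congrArg (A.interp o) (funext h)

/-- Meet of an arbitrary family of congruences (intersection). -/
def sInf (S : Set (Con A)) : Con A where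
  r a b := ∀ c ∈ S, c.r a b
  refl a c _ := c.refl a
  symm h c hc := c.symm (h c hc)
  trans h h' c hc := c.trans (h c hc) (h' c hc)
  compat o x y h c hc := c.compat o x y (fun i => h i c hc)

/-- Binary meet of congruences. -/
def inf (c d : Con A) : Con A where
  r a b := c.r a b ∧ d.r a b
  refl a := ⟨c.refl a, d.refl a⟩
  symm h := ⟨c.symm h.1, d.symm h.2⟩
  trans h h' := ⟨c.trans h.1 h'.1, d.trans h.2 h'.2⟩
  compat o x y h := ⟨c.compat o x y fun i => (h i).1, d.compat o x y fun i => (h i).2⟩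

/-- The congruence generated by a set of pairs. -/
def conGen (S : Set (A.carrier × A.carrier)) : Con A :=
  sInf {c : Con A | ∀ p ∈ S, c.r p.1 p.2}

/-- Binary join of congruences. -/
def sup (c d : Con A) : Con A := conGen {p | c.r p.1 p.2 ∨ d.r p.1 p.2}

/-- Join of a family of congruences. -/
def iSup {I : Type} (f : I → Con A) : Con A := conGen {p | ∃ i, (f i).r p.1 p.2}

/-- Composition of congruences as binary relations. -/
def comp (c d : Con A) (a b : A.carrier) : Prop := ∃ x, c.r a x ∧ d.r x b

/-- `d` covers `c` in the congruence lattice. -/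
def Covers (c d : Con A) : Prop := c < d ∧ ∀ e : Con A, c < e → e ≤ d → e = d

theorem le_sup_right {c d : Con A} : d ≤ sup c d :=
  fun a b h e he => he (a, b) (Or.inr h)

def toSetoid (c : Con A) : Setoid A.carrier := ⟨c.r, ⟨c.refl, c.symm, c.trans⟩⟩

end Con

/-- The quotient algebra `A/γ`. -/
noncomputable def quotAlg (A : Algebra σ) (γ : Con A) : Algebra σ where
  carrier := Quotient γ.toSetoid
  interp o x := Quotient.mk γ.toSetoid (A.interp o (fun i => (x i).out))

/-- The quotient congruence `α/γ` for `γ ≤ α`. -/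
noncomputable def Con.quot {A : Algebra σ} (α γ : Con A) (h : γ ≤ α) : Con (quotAlg A γ) where
  r x y := Quotient.liftOn₂ x y (fun a b => α.r a b)
    (fun a b a' b' ha hb => propext
      ⟨fun hr => α.trans (α.symm (h _ _ ha)) (α.trans hr (h _ _ hb)),
       fun hr => α.trans (h _ _ ha) (α.trans hr (α.symm (h _ _ hb)))⟩)
  refl x := Quotient.inductionOn x fun a => α.refl a
  symm {x y} h' := Quotient.inductionOn₂ x y (fun _ _ hab => α.symm hab) h'
  trans {x y z} h1 h2 :=
    Quotient.inductionOn₃ x y z (fun _ _ _ hab hbc => α.trans hab hbc) h1 h2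
  compat o x y hxy := by
    show α.r (A.interp o fun i => (x i).out) (A.interp o fun i => (y i).out)
    refine α.compat o _ _ fun i => ?_
    have h1 := hxy i
    rw [← Quotient.out_eq (x i), ← Quotient.out_eq (y i)] at h1
    exact h1

/-- The polynomial operations of an algebra: the clone generated by the basic
operations, the projections and the constants. -/
inductive IsPolynomial (A : Algebra σ) : {n : ℕ} → ((Fin n → A.carrier) → A.carrier) → Prop
  | proj {n : ℕ} (i : Fin n) : IsPolynomial A (fun x => x i)
  | const {n : ℕ} (a : A.carrier) : IsPolynomial A (fun _ : Fin n → A.carrier => a)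
  | app {n : ℕ} (o : σ.ops) (g : Fin (σ.arity o) → (Fin n → A.carrier) → A.carrier) :
      (∀ j, IsPolynomial A (g j)) → IsPolynomial A (fun x => A.interp o (fun j => g j x))

/-- Substituting, coordinatewise according to the grouping `g` and the choice
vector `ε`, the entries of `b` (where `ε` is `true`) or of `a` (where `ε` is `false`). -/
def chooseVec {β : Type} {N n : ℕ} (g : Fin N → Fin n) (a b : Fin N → β)
    (ε : Fin n → Bool) : Fin N → β :=
  fun i => if ε (g i) then b i else a i

/-- The higher centralizer relation `C(α₁,…,αₙ,β;δ)` of Bulatov.  Polynomials with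
grouped variables are modelled by a polynomial `p` of arity `N` together with a
grouping map `g : Fin N → Fin (n+1)`; the group `Fin.last n` is the `β`-group. -/
def Centralizes {A : Algebra σ} {n : ℕ} (α : Fin n → Con A) (β δ : Con A) : Prop :=
  ∀ (N : ℕ) (p : (Fin N → A.carrier) → A.carrier), IsPolynomial A p →
    ∀ (g : Fin N → Fin (n + 1)) (a b : Fin N → A.carrier),
      (∀ i, (Fin.lastCases (motive := fun _ => Con A) β α (g i)).r (a i) (b i)) →
      (∀ ε : Fin n → Bool, ε ≠ (fun _ => true) →
        δ.r (p (chooseVec g a b (Fin.lastCases (motive := fun _ => Bool) false ε)))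
            (p (chooseVec g a b (Fin.lastCases (motive := fun _ => Bool) true ε)))) →
      δ.r (p (chooseVec g a b (Fin.lastCases (motive := fun _ => Bool) false fun _ => true)))
          (p (chooseVec g a b (Fin.lastCases (motive := fun _ => Bool) true fun _ => true)))

/-- The higher commutator `[α₁,…,αₙ,β]`: the smallest congruence `δ` such that
`C(α₁,…,αₙ,β;δ)` holds. -/
def commutator {A : Algebra σ} {n : ℕ} (α : Fin n → Con A) (β : Con A) : Con A :=
  Con.sInf {δ : Con A | Centralizes α β δ}

/-- The higher commutator of a nonempty list of congruences, with the convention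
`[α] = α` for a single congruence. -/
def commList {A : Algebra σ} : {n : ℕ} → (Fin (n + 1) → Con A) → Con A
  | 0, γ => γ 0
  | (n+1), γ => commutator (fun j : Fin (n+1) => γ j.castSucc) (γ (Fin.last (n+1)))

/-- The `m`-fold commutator `[θ,…,θ]_m` (for `m ≥ 1`). -/
def nfold {A : Algebra σ} (θ : Con A) (m : ℕ) : Con A :=
  commList (fun _ : Fin (m - 1 + 1) => θ)

/-- The binary commutator `[c,d]`. -/
def binComm {A : Algebra σ} (c d : Con A) : Con A := commutator (fun _ : Fin 1 => c) d

/-- The lower central series `(θ]ⁿ`. -/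
def lcs {A : Algebra σ} (θ : Con A) : ℕ → Con A
  | 0 => θ
  | (k+1) => binComm θ (lcs θ k)

/-- The derived series `[θ]ⁿ`. -/
def derived {A : Algebra σ} (θ : Con A) : ℕ → Con A
  | 0 => θ
  | (k+1) => binComm (derived θ k) (derived θ k)

/-- An algebra is nilpotent if some term of the lower central series of `1_A` is `0_A`. -/
def Nilpotent (A : Algebra σ) : Prop := ∃ m, lcs (Con.top : Con A) m = Con.bot

/-- An algebra is nilpotent of class `n` if `(1_A]ⁿ = 0_A`. -/
def NilpotentOfClass (A : Algebra σ) (n : ℕ) : Prop := lcs (Con.top : Con A) n = Con.bot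

/-- A congruence is solvable if some term of its derived series is `0_A`. -/
def SolvableCon {A : Algebra σ} (θ : Con A) : Prop := ∃ m, derived θ m = Con.bot

/-- `A` is `n`-supernilpotent if `[1_A,…,1_A]_n = 0_A`. -/
def Supernilpotent (A : Algebra σ) (n : ℕ) : Prop := nfold (Con.top : Con A) n = Con.bot

/-- A polynomial `f` absorbs the tuple `a` to the element `c`. -/
def Absorbs (A : Algebra σ) {k : ℕ} (f : (Fin k → A.carrier) → A.carrier)
    (a : Fin k → A.carrier) (c : A.carrier) : Prop :=
  ∀ b : Fin k → A.carrier, (∃ i, b i = a i) → f b = c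

/-- Terms over a signature with variables in `X`. -/
inductive Term (σ : Signature) (X : Type) : Type
  | var : X → Term σ X
  | app : (o : σ.ops) → (Fin (σ.arity o) → Term σ X) → Term σ X

/-- Evaluation of a term in an algebra under an assignment of the variables. -/
def Term.eval {X : Type} (A : Algebra σ) (v : X → A.carrier) : Term σ X → A.carrier
  | Term.var x => v x
  | Term.app o t => A.interp o fun i => Term.eval A v (t i)

/-- Substitution of terms into a term. -/
def Term.subst {X Y : Type} : Term σ X → (X → Term σ Y) → Term σ Y
  | Term.var x, s => s x
  | Term.app o t, s => Term.app o fun i => Term.subst (t i) s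

/-- `A` possesses a Mal'cev term. -/
def HasMalcevTerm (A : Algebra σ) : Prop :=
  ∃ t : Term σ (Fin 3), ∀ a b : A.carrier,
    t.eval A ![a, b, b] = a ∧ t.eval A ![b, b, a] = a

/-- A class of algebras is a variety when it is the class of all models of a set
of identities. -/
def IsVariety (V : Algebra σ → Prop) : Prop :=
  ∃ E : Set (Term σ ℕ × Term σ ℕ),
    ∀ A : Algebra σ, V A ↔ ∀ e ∈ E, ∀ v : ℕ → A.carrier, e.1.eval A v = e.2.eval A v

/-- Two terms are `V`-equivalent when they evaluate equally in every member of `V`. -/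
def vSetoid (V : Algebra σ → Prop) (X : Type) : Setoid (Term σ X) where
  r t s := ∀ A : Algebra σ, V A → ∀ v : X → A.carrier, t.eval A v = s.eval A v
  iseqv := ⟨fun _ _ _ _ => rfl, fun h A hA v => (h A hA v).symm,
    fun h h' A hA v => (h A hA v).trans (h' A hA v)⟩

/-- The `V`-free algebra on the set `X` of generators. -/
noncomputable def freeAlg (V : Algebra σ → Prop) (X : Type) : Algebra σ where
  carrier := Quotient (vSetoid V X)
  interp o x := Quotient.mk (vSetoid V X) (Term.app o fun i => (x i).out)

/-- The principal congruence `θ(a,b)` generated by the pair `(a,b)`. -/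
def conPair (A : Algebra σ) (a b : A.carrier) : Con A := Con.conGen {(a, b)}

/-- A weak difference term for the class `V`. -/
def IsWeakDiffTerm (V : Algebra σ → Prop) (c : Term σ (Fin 3)) : Prop :=
  ∀ A : Algebra σ, V A → ∀ a b : A.carrier,
    (binComm (conPair A a b) (conPair A a b)).r (c.eval A ![a, b, b]) a ∧
    (binComm (conPair A a b) (conPair A a b)).r a (c.eval A ![b, b, a])

/-- A weak `n`-difference term for the class `V`. -/
def IsWeakNDiffTerm (V : Algebra σ → Prop) (n : ℕ) (c : Term σ (Fin 3)) : Prop :=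
  ∀ A : Algebra σ, V A → ∀ a b : A.carrier,
    (nfold (conPair A a b) n).r (c.eval A ![a, b, b]) a ∧
    (nfold (conPair A a b) n).r a (c.eval A ![b, b, a])

/-- Order-preserving maps on the congruence lattice. -/
def MonotoneCon {A : Algebra σ} (F : Con A → Con A) : Prop :=
  ∀ c d : Con A, c ≤ d → F c ≤ F d

/-- `p` is a weak `f`-term of `A` with respect to the interpretation `F`. -/
def IsWeakFTerm (A : Algebra σ) (F : Con A → Con A) (p : Term σ (Fin 3)) : Prop :=
  ∀ (θ : Con A) (a b : A.carrier), θ.r a b →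
    (F θ).r (p.eval A ![a, b, b]) a ∧ (F θ).r a (p.eval A ![b, b, a])

/-- `p` is a weak `f`-term for the class `V`. -/
def HasWeakFTermVariety (V : Algebra σ → Prop) (p : Term σ (Fin 3)) : Prop :=
  ∀ A : Algebra σ, V A → ∃ F : Con A → Con A, MonotoneCon F ∧ IsWeakFTerm A F p

/-- The set `T^θ_{n,f}(θ₁,…,θₙ)` of pairs coming from polynomials which
`f(θ)`-absorb on the cube `{ā₁,b̄₁}×⋯×{āₙ,b̄ₙ}`. -/
def TSet (A : Algebra σ) (F : Con A → Con A) (θ : Con A) {n : ℕ} (θs : Fin n → Con A) :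
    Set (A.carrier × A.carrier) :=
  {pr | ∃ (N : ℕ) (g : (Fin N → A.carrier) → A.carrier), IsPolynomial A g ∧
    ∃ (gr : Fin N → Fin n) (a b : Fin N → A.carrier),
      (∀ i, (θs (gr i)).r (a i) (b i)) ∧
      (∀ ε : Fin n → Bool, (∃ j, ε j = false) →
        (F θ).r (g (fun i => if ε (gr i) then b i else a i)) (g a)) ∧
      pr = (g b, g a)}

/-- Homomorphisms of algebras. -/
def IsHom (A B : Algebra σ) (h : A.carrier → B.carrier) : Prop :=
  ∀ (o : σ.ops) (x : Fin (σ.arity o) → A.carrier),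
    h (A.interp o x) = B.interp o (fun i => h (x i))

/-- The product of a family of algebras. -/
def prodAlg {I : Type} (As : I → Algebra σ) : Algebra σ where
  carrier := ∀ i, (As i).carrier
  interp o x i := (As i).interp o (fun j => x j i)

/-- The subuniverse generated by a subset. -/
inductive Gen (A : Algebra σ) (S : Set A.carrier) : A.carrier → Prop
  | base {a : A.carrier} : a ∈ S → Gen A S a
  | app (o : σ.ops) (x : Fin (σ.arity o) → A.carrier) :
      (∀ i, Gen A S (x i)) → Gen A S (A.interp o x)

/-- `A` possesses a Taylor term. -/
def HasTaylorTerm (A : Algebra σ) : Prop :=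
  ∃ (n : ℕ) (t : Term σ (Fin n)), 1 ≤ n ∧
    (∀ a : A.carrier, t.eval A (fun _ => a) = a) ∧
    ∀ i : Fin n, ∃ u v : Fin n → Bool, u i = true ∧ v i = false ∧
      ∀ x y : A.carrier,
        t.eval A (fun j => if u j then x else y) = t.eval A (fun j => if v j then x else y)

/-- The variety `V` possesses a Taylor term. -/
def VarietyHasTaylorTerm (V : Algebra σ → Prop) : Prop :=
  ∃ (n : ℕ) (t : Term σ (Fin n)), 1 ≤ n ∧
    (∀ A : Algebra σ, V A → ∀ a : A.carrier, t.eval A (fun _ => a) = a) ∧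
    ∀ i : Fin n, ∃ u v : Fin n → Bool, u i = true ∧ v i = false ∧
      ∀ A : Algebra σ, V A → ∀ x y : A.carrier,
        t.eval A (fun j => if u j then x else y) = t.eval A (fun j => if v j then x else y)

/-- `Ξ(θ)`: the smallest set of congruences containing `θ` and closed under
higher commutators (of arity at least 2) of its members. -/
inductive Xi {A : Algebra σ} (θ : Con A) : Con A → Prop
  | base : Xi θ θ
  | comm {k : ℕ} (γ : Fin (k + 2) → Con A) : (∀ j, Xi θ (γ j)) → Xi θ (commList γ)

/-- An expanded loop on the carrier `α` with extra operations indexed by `ι`. -/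
structure ExpLoop (ι : Type) (ar : ι → ℕ) (α : Type) : Type where
  mul : α → α → α
  ldiv : α → α → α
  rdiv : α → α → α
  zero : α
  extra : (i : ι) → (Fin (ar i) → α) → α
  ldiv_mul : ∀ x y, ldiv x (mul x y) = y
  mul_rdiv : ∀ x y, rdiv (mul x y) y = x
  mul_ldiv : ∀ x y, mul x (ldiv x y) = y
  rdiv_mul : ∀ x y, mul (rdiv x y) y = x
  zero_mul : ∀ x, mul zero x = x
  mul_zero : ∀ x, mul x zero = x

/-- Operation symbols of an expanded loop. -/
inductive LoopOp (ι : Type) : Type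
  | mul | ldiv | rdiv | zero
  | extra : ι → LoopOp ι

/-- The signature of an expanded loop. -/
@[reducible] def loopSig (ι : Type) (ar : ι → ℕ) : Signature where
  ops := LoopOp ι
  arity o := match o with
    | .mul => 2
    | .ldiv => 2
    | .rdiv => 2
    | .zero => 0
    | .extra i => ar i

/-- The algebra underlying an expanded loop. -/
def ExpLoop.toAlgebra {ι : Type} {ar : ι → ℕ} {α : Type} (L : ExpLoop ι ar α) :
    Algebra (loopSig ι ar) where
  carrier := α
  interp o := match o with
    | .mul => fun x => L.mul (x 0) (x 1)
    | .ldiv => fun x => L.ldiv (x 0) (x 1)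
    | .rdiv => fun x => L.rdiv (x 0) (x 1)
    | .zero => fun _ => L.zero
    | .extra i => L.extra i

/-- An expanded loop is of `n`-type. -/
def ExpLoop.IsNType {ι : Type} {ar : ι → ℕ} {α : Type} (L : ExpLoop ι ar α) (n : ℕ) : Prop :=
  (∀ p : Σ k : ℕ, (Fin k → α) → α,
      (∃ i : ι, p = ⟨ar i, L.extra i⟩) ↔
        (1 ≤ p.1 ∧ p.1 ≤ n - 1 ∧ IsPolynomial L.toAlgebra p.2 ∧
          Absorbs L.toAlgebra p.2 (fun _ => L.zero) L.zero)) ∧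
  (∀ f : (Fin (n - 1) → α) → α,
      IsPolynomial L.toAlgebra f → Absorbs L.toAlgebra f (fun _ => L.zero) L.zero →
      ∀ (j : Fin (n - 1)) (x : Fin (n - 1) → α) (u v : α),
        f (Function.update x j (L.mul u v)) =
          L.mul (f (Function.update x j u)) (f (Function.update x j v))) ∧
  (∀ k : ℕ, 2 ≤ k → k < n →
      commList (Fin.snoc (fun _ : Fin (n - k) => (Con.top : Con L.toAlgebra))
        (nfold Con.top k)) = Con.bot)

/-- `A` is polynomially equivalent to an `n`-type expanded loop on the same carrier. -/
def PolyEquivNTypeLoop (A : Algebra σ) (n : ℕ) : Prop :=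
  ∃ (ι : Type) (ar : ι → ℕ) (L : ExpLoop ι ar A.carrier),
    L.IsNType n ∧
    ∀ (k : ℕ) (f : (Fin k → A.carrier) → A.carrier),
      IsPolynomial A f ↔ IsPolynomial L.toAlgebra f

/-- Left-associated product of a list with initial value `c`. -/
def lprodFrom {β : Type} (mul : β → β → β) (c : β) (l : List β) : β := List.foldl mul c l

/-- Left-associated product of a list (with a default value for the empty list). -/
def lprodList {β : Type} (mul : β → β → β) (dflt : β) : List β → β
  | [] => dflt
  | a :: l => List.foldl mul a l

/-- Left-associated product of a nonempty tuple. -/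
def lassoc {β : Type} (mul : β → β → β) : {m : ℕ} → (Fin (m + 1) → β) → β
  | 0, y => y 0
  | (m+1), y => mul (lassoc mul (Fin.init y)) (y (Fin.last (m+1)))

/-- `A` has a representation of degree `n`. -/
def HasRepOfDegree (A : Algebra σ) (n : ℕ) : Prop :=
  ∃ (z : A.carrier) (r : (Fin 2 → A.carrier) → A.carrier),
    IsPolynomial A r ∧ (∀ x : A.carrier, r ![z, x] = x) ∧ (∀ x : A.carrier, r ![x, z] = x) ∧
    ∀ (k : ℕ) (f : (Fin k → A.carrier) → A.carrier), IsPolynomial A f →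
      ∃ (c : A.carrier) (R : ℕ → (Fin k → A.carrier) → A.carrier),
        (∀ m : ℕ, 1 ≤ m → m ≤ min k n →
          ∃ (l : List (Finset (Fin k)))
            (t : (S : Finset (Fin k)) → (Fin S.card → A.carrier) → A.carrier),
            l.Nodup ∧
            (∀ S : Finset (Fin k), S ∈ l ↔ S.card = m) ∧
            (∀ S ∈ l, IsPolynomial A (t S) ∧ Absorbs A (t S) (fun _ => z) z) ∧
            (∀ x : Fin k → A.carrier,
              R m x = lprodList (fun u v => r ![u, v]) z
                (l.map (fun S => t S (fun j => x ((S.orderIsoOfFin rfl j).val)))))) ∧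
        ∀ x : Fin k → A.carrier,
          f x = lprodFrom (fun u v => r ![u, v]) c
            ((List.range' 1 (min k n)).map (fun m => R m x))

/-- Products of `0`-absorbing polynomials (of arities between `lo` and `hi`)
in a given set of variables. -/
inductive ProdOfAbs {ι : Type} {ar : ι → ℕ} {α : Type} (L : ExpLoop ι ar α)
    (lo hi : ℕ) {I : Type} : ((I → α) → α) → Prop
  | base {p : ℕ} (h : (Fin p → α) → α) (sel : Fin p → I) :
      lo ≤ p → p ≤ hi → IsPolynomial L.toAlgebra h →
      Absorbs L.toAlgebra h (fun _ => L.zero) L.zero →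
      ProdOfAbs L lo hi (fun v => h (fun j => v (sel j)))
  | mul {F G : (I → α) → α} :
      ProdOfAbs L lo hi F → ProdOfAbs L lo hi G →
      ProdOfAbs L lo hi (fun v => L.mul (F v) (G v))

/-- The terms `q_m` (for `m ≥ 2`, `qSeq q (m-2)` is `q_m`):
`q₂ := q`, `q_{m+1}(x,y,z) := q(x, q_m(x,y,y), q_m(x,y,z))`. -/
def qSeq (q : Term σ (Fin 3)) : ℕ → Term σ (Fin 3)
  | 0 => q
  | (k+1) => q.subst ![Term.var 0, (qSeq q k).subst ![Term.var 0, Term.var 1, Term.var 1], qSeq q k]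


/-- Functions on the `k`-cube generated by constants and `s`-edges. -/
inductive IsCube (A : Algebra σ) (s : Con A) (k : ℕ) : ((Fin k → Bool) → A.carrier) → Prop
  | edge (j : Fin k) (a b : A.carrier) : s.r a b → IsCube A s k (fun ε => if ε j then b else a)
  | const (a : A.carrier) : IsCube A s k (fun _ => a)
  | app (o : σ.ops) (G : Fin (σ.arity o) → (Fin k → Bool) → A.carrier) :
      (∀ j, IsCube A s k (G j)) → IsCube A s k (fun ε => A.interp o (fun j => G j ε))

theorem IsPolynomial.congr_r {A : Algebra σ} (c : Con A) {n : ℕ}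
    {p : (Fin n → A.carrier) → A.carrier} (hp : IsPolynomial A p) :
    ∀ x y : Fin n → A.carrier, (∀ i, c.r (x i) (y i)) → c.r (p x) (p y) := by
  induction hp with
  | proj i => intro x y h; exact h i
  | const a => intro x y h; exact c.refl a
  | app o g _ ih => intro x y h; exact c.compat o _ _ (fun j => ih j x y h)

theorem IsPolynomial.comp_poly {A : Algebra σ} {n m : ℕ}
    {p : (Fin n → A.carrier) → A.carrier} (hp : IsPolynomial A p) :
    ∀ q : Fin n → (Fin m → A.carrier) → A.carrier, (∀ i, IsPolynomial A (q i)) →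
      IsPolynomial A (fun x => p (fun i => q i x)) := by
  induction hp with
  | proj i => intro q h; exact h i
  | const a => intro q h; exact IsPolynomial.const a
  | app o g _ ih => intro q h; exact IsPolynomial.app o _ (fun j => ih j q h)

theorem IsPolynomial.comp_cube {A : Algebra σ} {s : Con A} {n k : ℕ}
    {p : (Fin n → A.carrier) → A.carrier} (hp : IsPolynomial A p) :
    ∀ q : Fin n → (Fin k → Bool) → A.carrier, (∀ i, IsCube A s k (q i)) →
      IsCube A s k (fun x => p (fun i => q i x)) := by
  induction hp with
  | proj i => intro q h; exact h i
  | const a => intro q h; exact IsCube.const a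
  | app o g _ ih => intro q h; exact IsCube.app o _ (fun j => ih j q h)

theorem IsCube.reindex {A : Algebra σ} {s : Con A} {k l : ℕ} (e : Fin k → Fin l)
    {F : (Fin k → Bool) → A.carrier} (hF : IsCube A s k F) :
    IsCube A s l (fun ε => F (fun i => ε (e i))) := by
  induction hF with
  | edge j a b h => exact IsCube.edge (e j) a b h
  | const a => exact IsCube.const a
  | app o G _ ih => exact IsCube.app o _ ih

/-- Every cube function comes from a polynomial with grouped variables. -/
theorem IsCube.exists_poly {A : Algebra σ} {s : Con A} {k : ℕ}
    {F : (Fin k → Bool) → A.carrier} (hF : IsCube A s k F) :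
    ∃ (N : ℕ) (p : (Fin N → A.carrier) → A.carrier) (g : Fin N → Fin k)
      (a b : Fin N → A.carrier), IsPolynomial A p ∧ (∀ i, s.r (a i) (b i)) ∧
      ∀ ε, F ε = p (chooseVec g a b ε) := by
  induction hF with
  | edge j a b h =>
    exact ⟨1, fun x => x 0, fun _ => j, fun _ => a, fun _ => b, IsPolynomial.proj 0,
      fun _ => h, fun ε => rfl⟩
  | const a =>
    exact ⟨0, fun _ => a, fun i => i.elim0, fun i => i.elim0, fun i => i.elim0,
      IsPolynomial.const a, fun i => i.elim0, fun ε => rfl⟩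
  | app o G _ ih =>
    choose N p g a b hp hs hF using ih
    let E := @finSigmaFinEquiv (σ.arity o) N
    refine ⟨∑ i, N i, fun x => A.interp o (fun j => p j (fun i => x (E ⟨j, i⟩))),
      fun i => g (E.symm i).1 (E.symm i).2, fun i => a (E.symm i).1 (E.symm i).2,
      fun i => b (E.symm i).1 (E.symm i).2, ?_, fun i => hs _ _, ?_⟩
    · exact IsPolynomial.app o _ (fun j =>
        (hp j).comp_poly _ (fun i => IsPolynomial.proj (E ⟨j, i⟩)))
    · intro ε
      show A.interp o _ = A.interp o _
      congr 1
      funext j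
      rw [hF]
      congr 1
      funext i
      simp only [chooseVec]
      rw [E.symm_apply_apply]

theorem Term.eval_poly (A : Algebra σ) {n : ℕ} (t : Term σ (Fin n)) :
    IsPolynomial A (fun x : Fin n → A.carrier => t.eval A x) := by
  induction t with
  | var i => exact IsPolynomial.proj i
  | app o t ih => exact IsPolynomial.app o _ ih

/-- The congruence `γ ∨ Cg(u,v)` in a Mal'cev algebra, described by unary polynomials. -/
def unaryCon {A : Algebra σ} (m : (Fin 3 → A.carrier) → A.carrier) (hm : IsPolynomial A m)
    (m1 : ∀ a b, m ![a, b, b] = a) (m2 : ∀ a b, m ![b, b, a] = a)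
    (γ : Con A) (u v : A.carrier) : Con A where
  r x y := ∃ g : (Fin 1 → A.carrier) → A.carrier, IsPolynomial A g ∧
    γ.r x (g (fun _ => u)) ∧ γ.r y (g (fun _ => v))
  refl a := ⟨fun _ => a, IsPolynomial.const a, γ.refl a, γ.refl a⟩
  symm := by
    rintro x y ⟨g, hg, h1, h2⟩
    refine ⟨fun z => m (fun i => (![fun _ => x, g, fun _ => y] :
      Fin 3 → (Fin 1 → A.carrier) → A.carrier) i z), hm.comp_poly _ ?_, ?_, ?_⟩
    · intro i; fin_cases i
      · exact IsPolynomial.const x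
      · exact hg
      · exact IsPolynomial.const y
    · have := hm.congr_r γ ![x, x, y] (fun i => (![fun _ => x, g, fun _ => y] :
        Fin 3 → (Fin 1 → A.carrier) → A.carrier) i (fun _ => u))
        (by intro i; fin_cases i; exacts [γ.refl _, h1, γ.refl _])
      rwa [m2] at this
    · have := hm.congr_r γ ![x, y, y] (fun i => (![fun _ => x, g, fun _ => y] :
        Fin 3 → (Fin 1 → A.carrier) → A.carrier) i (fun _ => v))
        (by intro i; fin_cases i; exacts [γ.refl _, h2, γ.refl _])
      rwa [m1] at this
  trans := by
    rintro x y w ⟨g, hg, h1, h2⟩ ⟨h, hh, h3, h4⟩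
    refine ⟨fun z => m (fun i => (![g, fun _ => y, h] :
      Fin 3 → (Fin 1 → A.carrier) → A.carrier) i z), hm.comp_poly _ ?_, ?_, ?_⟩
    · intro i; fin_cases i
      · exact hg
      · exact IsPolynomial.const y
      · exact hh
    · have := hm.congr_r γ ![x, y, y] (fun i => (![g, fun _ => y, h] :
        Fin 3 → (Fin 1 → A.carrier) → A.carrier) i (fun _ => u))
        (by intro i; fin_cases i; exacts [h1, γ.refl _, h3])
      rwa [m1] at this
    · have := hm.congr_r γ ![y, y, w] (fun i => (![g, fun _ => y, h] :
        Fin 3 → (Fin 1 → A.carrier) → A.carrier) i (fun _ => v))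
        (by intro i; fin_cases i; exacts [h2, γ.refl _, h4])
      rwa [m2] at this
  compat o x y h := by
    choose g hg h1 h2 using h
    exact ⟨fun z => A.interp o (fun j => g j z), IsPolynomial.app o _ hg,
      γ.compat o _ _ h1, γ.compat o _ _ h2⟩

theorem exists_unary {A : Algebra σ} (m : (Fin 3 → A.carrier) → A.carrier)
    (hm : IsPolynomial A m)
    (m1 : ∀ a b, m ![a, b, b] = a) (m2 : ∀ a b, m ![b, b, a] = a)
    (γ s : Con A) (hc : Con.Covers γ s) (u v : A.carrier) (hs : s.r u v) (hγ : ¬ γ.r u v)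
    (x y : A.carrier) (hxy : s.r x y) :
    ∃ g : (Fin 1 → A.carrier) → A.carrier, IsPolynomial A g ∧
      γ.r x (g (fun _ => u)) ∧ γ.r y (g (fun _ => v)) := by
  have hγs : γ ≤ s := hc.1.1
  have huv : (unaryCon m hm m1 m2 γ u v).r u v :=
    ⟨fun x => x 0, IsPolynomial.proj 0, γ.refl _, γ.refl _⟩
  have heq := hc.2 (unaryCon m hm m1 m2 γ u v)
    ⟨fun a b h => ⟨fun _ => a, IsPolynomial.const a, γ.refl _, γ.symm h⟩,
      fun h => hγ (h u v huv)⟩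
    (by
      rintro a b ⟨g, hg, h1, h2⟩
      exact s.trans (hγs _ _ h1) (s.trans (hg.congr_r s _ _ (fun _ => hs))
        (s.symm (hγs _ _ h2))))
  rw [← heq] at hxy
  exact hxy

/-- Main construction: if `γ` is covered by `s` and the interval is not abelian, there are
absorbing cubes of every dimension. -/
theorem exists_absorbing {A : Algebra σ} (m : (Fin 3 → A.carrier) → A.carrier)
    (hm : IsPolynomial A m)
    (m1 : ∀ a b, m ![a, b, b] = a) (m2 : ∀ a b, m ![b, b, a] = a)
    (γ s : Con A) (hc : Con.Covers γ s)
    {N : ℕ} (p : (Fin N → A.carrier) → A.carrier) (hp : IsPolynomial A p)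
    (L : Fin N → Bool) (a b : Fin N → A.carrier) (hab : ∀ i, s.r (a i) (b i))
    (h0 : γ.r (p a) (p (fun i => if L i then b i else a i)))
    (h1 : ¬ γ.r (p (fun i => if L i then a i else b i)) (p b)) (k : ℕ) :
    ∃ (F : (Fin k → Bool) → A.carrier) (u v : A.carrier), IsCube A s k F ∧ s.r u v ∧
      ¬ γ.r u v ∧ (∀ ε, ε ≠ (fun _ => true) → F ε = u) ∧ F (fun _ => true) = v := by
  induction k with
  | zero =>
    refine ⟨fun _ => p b, _, p b, IsCube.const _, ?_, h1, ?_, rfl⟩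
    · refine hp.congr_r s _ _ (fun i => ?_)
      split
      · exact hab i
      · exact s.refl _
    · intro ε hε
      exact absurd (funext fun i => i.elim0) hε
  | succ k ih =>
    obtain ⟨F, u, v, hF, huv, hnuv, hFu, hFv⟩ := ih
    have hu := fun i => exists_unary m hm m1 m2 γ s hc u v huv hnuv (a i) (b i) (hab i)
    choose G hG hGu hGv using hu
    set u0 := p (fun i => if L i then a i else b i) with hu0
    -- the polynomial in two groups of variables
    let P : (Fin N → A.carrier) → (Fin N → A.carrier) → A.carrier :=
      fun X Y => p (fun i => if L i then Y i else X i)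
    let Q : (Fin N → A.carrier) → (Fin N → A.carrier) → A.carrier :=
      fun X Y => m ![P X Y, P X a, u0]
    let R : A.carrier → (Fin N → A.carrier) → A.carrier :=
      fun z Y => m ![Q (fun i => G i (fun _ => z)) Y, Q (fun i => G i (fun _ => u)) Y, u0]
    have cP : ∀ (X Y : Fin N → (Fin (k+1) → Bool) → A.carrier),
        (∀ i, IsCube A s (k+1) (X i)) → (∀ i, IsCube A s (k+1) (Y i)) →
        IsCube A s (k+1) (fun ε => P (fun i => X i ε) (fun i => Y i ε)) := by
      intro X Y hX hY
      have := hp.comp_cube (fun i => if L i then Y i else X i)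
        (by intro i; split; exacts [hY i, hX i])
      convert this using 4 with ε i
      split <;> rfl
    have cm : ∀ (x y z : (Fin (k+1) → Bool) → A.carrier), IsCube A s (k+1) x →
        IsCube A s (k+1) y → IsCube A s (k+1) z →
        IsCube A s (k+1) (fun ε => m ![x ε, y ε, z ε]) := by
      intro x y z hx hy hz
      have := hm.comp_cube ![x, y, z] (by intro i; fin_cases i; exacts [hx, hy, hz])
      convert this using 3 with ε
      funext i; fin_cases i <;> rfl
    have cQ : ∀ (X Y : Fin N → (Fin (k+1) → Bool) → A.carrier),
        (∀ i, IsCube A s (k+1) (X i)) → (∀ i, IsCube A s (k+1) (Y i)) →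
        IsCube A s (k+1) (fun ε => Q (fun i => X i ε) (fun i => Y i ε)) := by
      intro X Y hX hY
      exact cm _ _ _ (cP X Y hX hY) (cP X (fun i _ => a i) hX (fun i => IsCube.const _))
        (IsCube.const _)
    have γm : ∀ x x' y y' z z', γ.r x x' → γ.r y y' → γ.r z z' →
        γ.r (m ![x, y, z]) (m ![x', y', z']) := by
      intro x x' y y' z z' hx hy hz
      exact hm.congr_r γ _ _ (by intro i; fin_cases i; exacts [hx, hy, hz])
    have γP : ∀ X X' Y, (∀ i, γ.r (X i) (X' i)) → γ.r (P X Y) (P X' Y) := by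
      intro X X' Y h
      refine hp.congr_r γ _ _ (fun i => ?_)
      split
      · exact γ.refl _
      · exact h i
    have γQ : ∀ X X' Y, (∀ i, γ.r (X i) (X' i)) → γ.r (Q X Y) (Q X' Y) := by
      intro X X' Y h
      exact γm _ _ _ _ _ _ (γP _ _ _ h) (γP _ _ _ h) (γ.refl _)
    have Qa : ∀ X, Q X a = u0 := fun X => m2 _ _
    have Ru : ∀ Y, R u Y = u0 := fun Y => m2 _ _
    have Ra : ∀ z, R z a = u0 := by
      intro z
      show m ![Q _ a, Q _ a, u0] = u0
      rw [Qa, Qa, m2]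
    have hRv : γ.r (R v b) (p b) := by
      have e1 : γ.r (Q (fun i => G i (fun _ => v)) b) (p b) := by
        have : Q b b = p b := by
          have hb : P b b = p b := by
            show p _ = p b
            congr 1; funext i; simp
          show m ![P b b, P b a, u0] = p b
          rw [hb]; exact m1 _ _
        rw [← this]
        exact γQ _ _ _ (fun i => γ.symm (hGv i))
      have e2 : γ.r (Q (fun i => G i (fun _ => u)) b) u0 := by
        refine γ.trans (γQ _ a _ (fun i => γ.symm (hGu i))) ?_
        have haa : P a a = p a := by
          show p _ = p a
          congr 1; funext i; simp
        have := γm (P a b) (P a a) (P a a) (P a a) u0 u0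
          (by rw [haa]; exact γ.symm h0) (γ.refl _) (γ.refl _)
        rwa [m2] at this
      have := γm _ _ _ _ u0 u0 e1 e2 (γ.refl _)
      rwa [m1] at this
    have hcube : IsCube A s (k+1) (fun ε => R (F (fun i => ε i.castSucc))
        (fun i => if ε (Fin.last k) then b i else a i)) := by
      have hY : ∀ i, IsCube A s (k+1) (fun ε => if ε (Fin.last k) then b i else a i) :=
        fun i => IsCube.edge (Fin.last k) (a i) (b i) (hab i)
      refine cm _ _ _ ?_ ?_ (IsCube.const _)
      · exact cQ (fun i ε => G i (fun _ => F (fun j => ε j.castSucc))) _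
          (fun i => (hG i).comp_cube (fun _ ε => F (fun j => ε j.castSucc))
            (fun _ => hF.reindex _)) hY
      · exact cQ (fun i _ => G i (fun _ => u)) _ (fun i => IsCube.const _) hY
    have hn : ¬ γ.r u0 (R v b) := fun h => h1 (γ.trans h hRv)
    have hs0 : s.r u0 (R v b) := by
      refine s.trans ?_ (s.symm (hc.1.1 _ _ hRv))
      refine hp.congr_r s _ _ (fun i => ?_)
      split
      · exact hab i
      · exact s.refl _
    refine ⟨_, u0, R v b, hcube, hs0, hn, ?_, ?_⟩
    · intro ε hε
      by_cases hl : ε (Fin.last k) = true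
      · rw [hFu, Ru]
        intro h
        apply hε
        funext i
        refine Fin.lastCases hl (fun j => ?_) i
        exact congrFun h j
      · simp only [hl]
        exact Ra _
    · simp [hFv]

/-- Lemma 4.2 of "On Supernilpotent Algebras": in a Mal'cev algebra, every cover
inside an `n`-supernilpotent interval of the congruence lattice is abelian. -/
theorem malcev_supernilpotent_interval_covers_abelian {σ : Signature} (A : Algebra σ)
    (hM : HasMalcevTerm A) (n : ℕ) (hn : 2 ≤ n)
    (α β : Con A) (hab : α ≤ β) (hsn : nfold β n ≤ α) :
    ∀ γ s : Con A, α ≤ γ → Con.Covers γ s → s ≤ β →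
      Centralizes (fun _ : Fin 1 => s) s γ := by
  obtain ⟨t, ht⟩ := hM
  intro γ s hαγ hc hsβ N p hp g a b hab' hprem
  have hm := Term.eval_poly A t
  by_contra hcon
  have hsab : ∀ i, s.r (a i) (b i) := by
    intro i
    have := hab' i
    revert this
    refine Fin.lastCases ?_ (fun j => ?_) (g i)
    · rw [Fin.lastCases_last]; exact id
    · rw [Fin.lastCases_castSucc]; exact id
  obtain ⟨k, rfl⟩ : ∃ k, n = k + 2 := ⟨n - 2, by omega⟩
  have hval : ∀ (x y : Bool) (i : Fin N),
      (Fin.lastCases (motive := fun _ => Bool) x (fun _ : Fin 1 => y) (g i)) =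
        if decide (g i = Fin.last 1) then x else y := by
    intro x y i
    refine Fin.lastCases ?_ (fun j => ?_) (g i)
    · rw [Fin.lastCases_last]; simp
    · have : j.castSucc ≠ Fin.last 1 := (Fin.castSucc_lt_last j).ne
      rw [Fin.lastCases_castSucc, if_neg (by simpa only [decide_eq_true_eq] using this)]
  have hvec : ∀ (x y : Bool), chooseVec g a b
      (Fin.lastCases (motive := fun _ => Bool) x (fun _ : Fin 1 => y)) =
      fun i => if (if decide (g i = Fin.last 1) then x else y) then b i else a i := by
    intro x y
    funext i
    simp only [chooseVec, hval]
  have h0 := hprem (fun _ => false) (by intro h; simpa using congrFun h 0)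
  rw [hvec, hvec] at h0
  rw [hvec, hvec] at hcon
  obtain ⟨F, u, v, hF, huv, hnuv, hFu, hFv⟩ := exists_absorbing _ hm
    (fun a b => (ht a b).1) (fun a b => (ht a b).2) γ s hc p hp
    (fun i => decide (g i = Fin.last 1)) a b hsab
    (by
      convert h0 using 2
      · funext i; simp
      · funext i; simp)
    (by
      intro h
      apply hcon
      convert h using 2
      · funext i; by_cases h : g i = Fin.last 1 <;> simp [h]
      · funext i; simp) (k + 2)
  obtain ⟨M, q, gr, c, d, hq, hcd, hFq⟩ := hF.exists_poly
  apply hnuv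
  apply hαγ
  apply hsn
  intro δ hδ
  have key := hδ M q hq gr c d (by
    intro i
    have := hsβ _ _ (hcd i)
    revert this
    refine Fin.lastCases ?_ (fun j => ?_) (gr i) <;> simp) (by
    intro ε hε
    rw [← hFq, ← hFq, hFu, hFu]
    · exact δ.refl _
    · intro h
      apply hε
      funext j
      simpa using congrFun h j.castSucc
    · intro h
      apply hε
      funext j
      simpa using congrFun h j.castSucc)
  rw [← hFq, ← hFq, hFu] at key
  · have hall : (Fin.lastCases (motive := fun _ => Bool) true
        (fun _ : Fin (k + 1) => true)) = fun _ => true := by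
      funext j
      refine Fin.lastCases ?_ (fun j => ?_) j <;> simp
    rw [hall, hFv] at key
    exact key
  · intro h
    simpa using congrFun h (Fin.last (k + 1))

end UA
end

section
/- Let A be a finite algebra and suppose (α,β) is an n-supernilpotent interval in the congruence lattice of A for some n ≥ 2. Then for every covering pair γ ≺ σ with α ≤ γ ≺ σ ≤ β, the interval (γ,σ) is abelian, i.e., C(σ,σ;γ) holds in A. -/
set_option autoImplicit false

namespace UA

variable {σ : Signature}

/-! ### Auxiliary material for the proof -/

/-- Functions on a space `S` generated from a set of functions by the operations and constants. -/
inductive PolG (A : Algebra σ) {S : Type} (G : (S → A.carrier) → Prop) :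
    (S → A.carrier) → Prop
  | gen (h : S → A.carrier) : G h → PolG A G h
  | const (a : A.carrier) : PolG A G (fun _ => a)
  | app (o : σ.ops) (g : Fin (σ.arity o) → S → A.carrier) :
      (∀ j, PolG A G (g j)) → PolG A G (fun x => A.interp o (fun j => g j x))

theorem PolG.comp {A : Algebra σ} {S T : Type} {G : (S → A.carrier) → Prop}
    {G' : (T → A.carrier) → Prop} (φ : T → S) {f : S → A.carrier} (hf : PolG A G f)
    (h : ∀ k, G k → PolG A G' (fun t => k (φ t))) : PolG A G' (fun t => f (φ t)) := by
  induction hf with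
  | gen k hk => exact h k hk
  | const a => exact PolG.const a
  | app o g _ ih => exact PolG.app o _ ih

/-- Unary polynomials. -/
def Un (A : Algebra σ) (f : A.carrier → A.carrier) : Prop :=
  PolG A (fun h => h = fun x => x) f

/-- Binary polynomials. -/
def Bin (A : Algebra σ) (f : A.carrier → A.carrier → A.carrier) : Prop :=
  PolG A (S := A.carrier × A.carrier) (fun h => h = (fun p => p.1) ∨ h = (fun p => p.2))
    (fun p => f p.1 p.2)

/-- Twin unary polynomials: `f(c̄, x)` and `f(d̄, x)` with `c̄` and `d̄` congruent. -/
inductive Tw {A : Algebra σ} (s : Con A) :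
    (A.carrier → A.carrier) → (A.carrier → A.carrier) → Prop
  | id : Tw s (fun x => x) (fun x => x)
  | const (a b : A.carrier) : s.r a b → Tw s (fun _ => a) (fun _ => b)
  | app (o : σ.ops) (f g : Fin (σ.arity o) → A.carrier → A.carrier) :
      (∀ j, Tw s (f j) (g j)) →
      Tw s (fun x => A.interp o (fun j => f j x)) (fun x => A.interp o (fun j => g j x))

section
variable {A : Algebra σ}

theorem Un.id : Un A (fun x => x) := PolG.gen _ rfl

theorem Un.pol {S : Type} {G : (S → A.carrier) → Prop} {f : A.carrier → A.carrier}
    {g : S → A.carrier} (hf : Un A f) (hg : PolG A G g) : PolG A G (fun x => f (g x)) :=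
  PolG.comp g hf (by rintro k rfl; exact hg)

theorem Bin.pol {S : Type} {G : (S → A.carrier) → Prop}
    {f : A.carrier → A.carrier → A.carrier}
    {g k : S → A.carrier} (hf : Bin A f) (hg : PolG A G g) (hk : PolG A G k) :
    PolG A G (fun x => f (g x) (k x)) :=
  PolG.comp (fun x => (g x, k x)) hf (by rintro k (rfl | rfl) <;> assumption)

theorem Bin.fst : PolG A (S := A.carrier × A.carrier)
    (fun h => h = (fun p => p.1) ∨ h = (fun p => p.2)) (fun p => p.1) := PolG.gen _ (Or.inl rfl)
theorem Bin.snd : PolG A (S := A.carrier × A.carrier)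
    (fun h => h = (fun p => p.1) ∨ h = (fun p => p.2)) (fun p => p.2) := PolG.gen _ (Or.inr rfl)

theorem Un.iter {f : A.carrier → A.carrier} (hf : Un A f) (k : ℕ) : Un A (f^[k]) := by
  induction k with
  | zero => exact Un.id
  | succ k ih =>
    rw [Function.iterate_succ']
    have := Un.pol hf ih
    exact this

theorem Bin.iter {f : A.carrier → A.carrier → A.carrier} (hf : Bin A f) (u : A.carrier) (k : ℕ) :
    Un A (fun y => (fun x => f x y)^[k] u) := by
  induction k with
  | zero => exact PolG.const u
  | succ k ih =>
    simp only [Function.iterate_succ_apply']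
    exact Bin.pol hf ih Un.id

variable {s : Con A}

theorem PolG.tw {S : Type} {G : (S → A.carrier) → Prop} (φ ψ : A.carrier → S)
    {f : S → A.carrier} (hf : PolG A G f)
    (h : ∀ k, G k → Tw s (fun t => k (φ t)) (fun t => k (ψ t))) :
    Tw s (fun t => f (φ t)) (fun t => f (ψ t)) := by
  induction hf with
  | gen k hk => exact h k hk
  | const a => exact Tw.const a a (s.refl a)
  | app o g _ ih => exact Tw.app o _ _ ih

theorem Un.tw {f φ ψ : A.carrier → A.carrier} (hf : Un A f) (h : Tw s φ ψ) :
    Tw s (fun x => f (φ x)) (fun x => f (ψ x)) :=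
  PolG.tw φ ψ hf (by rintro k rfl; exact h)

theorem Un.tw_self {f : A.carrier → A.carrier} (hf : Un A f) : Tw s f f := Un.tw hf Tw.id

theorem Bin.tw {f : A.carrier → A.carrier → A.carrier} {φ ψ φ' ψ' : A.carrier → A.carrier}
    (hf : Bin A f) (h : Tw s φ ψ) (h' : Tw s φ' ψ') :
    Tw s (fun x => f (φ x) (φ' x)) (fun x => f (ψ x) (ψ' x)) :=
  PolG.tw (fun x => (φ x, φ' x)) (fun x => (ψ x, ψ' x)) hf
    (by rintro k (rfl | rfl) <;> assumption)

theorem Tw.symm {φ ψ : A.carrier → A.carrier} (h : Tw s φ ψ) : Tw s ψ φ := by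
  induction h with
  | id => exact Tw.id
  | const a b h => exact Tw.const b a (s.symm h)
  | app o f g _ ih => exact Tw.app o _ _ ih

theorem Tw.left {φ ψ : A.carrier → A.carrier} (h : Tw s φ ψ) : Un A φ := by
  induction h with
  | id => exact Un.id
  | const a b h => exact PolG.const a
  | app o f g _ ih => exact PolG.app o _ ih

theorem Tw.right {φ ψ : A.carrier → A.carrier} (h : Tw s φ ψ) : Un A ψ := h.symm.left

theorem Tw.rel {φ ψ : A.carrier → A.carrier} (h : Tw s φ ψ) (x : A.carrier) :
    s.r (φ x) (ψ x) := by
  induction h with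
  | id => exact s.refl x
  | const a b h => exact h
  | app o f g _ ih => exact s.compat o _ _ ih

theorem Tw.comp {φ ψ φ' ψ' : A.carrier → A.carrier} (h : Tw s φ ψ) (h' : Tw s φ' ψ') :
    Tw s (fun x => φ (φ' x)) (fun x => ψ (ψ' x)) := by
  induction h with
  | id => exact h'
  | const a b h => exact Tw.const a b h
  | app o f g _ ih => exact Tw.app o _ _ ih

theorem Tw.iter {φ ψ : A.carrier → A.carrier} (h : Tw s φ ψ) (k : ℕ) : Tw s (φ^[k]) (ψ^[k]) := by
  induction k with
  | zero => exact Tw.id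
  | succ k ih =>
    rw [Function.iterate_succ', Function.iterate_succ']
    have := Tw.comp h ih
    exact this

theorem Un.con {f : A.carrier → A.carrier} (hf : Un A f) (c : Con A) {x y : A.carrier}
    (h : c.r x y) : c.r (f x) (f y) := by
  induction hf with
  | gen k hk => subst hk; exact h
  | const a => exact c.refl a
  | app o g _ ih => exact c.compat o _ _ ih

end

/-- Changing a tuple one coordinate at a time. -/
theorem one_by_one {ι X Y : Type} [Finite ι] (R : X → X → Prop) (R' : Y → Y → Prop)
    (refl' : ∀ a, R' a a) (trans' : ∀ a b c, R' a b → R' b c → R' a c)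
    (F : (ι → X) → Y) (x y : ι → X) (hxy : ∀ i, R (x i) (y i))
    (step : ∀ z : ι → X, (∀ j, z j = x j ∨ z j = y j) → ∀ i y',
      R (z i) y' → z i = x i → y' = y i →
      R' (F z) (F (fun j => open Classical in if j = i then y' else z j))) :
    R' (F x) (F y) := by
  classical
  cases nonempty_fintype ι
  have key : ∀ T : Finset ι, R' (F x) (F (fun i => if i ∈ T then y i else x i)) := by
    intro T
    induction T using Finset.induction_on with
    | empty => simpa using refl' (F x)
    | insert i T hi ih =>
      refine trans' _ _ _ ih ?_
      have h2 := step (fun i => if i ∈ T then y i else x i)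
        (fun j => by by_cases hj : j ∈ T <;> simp [hj]) i (y i) (by simpa [hi] using hxy i)
        (by simp [hi]) rfl
      convert h2 using 2
      funext j
      by_cases hj : j = i
      · subst hj; simp
      · simp [hj]
  simpa using key Finset.univ

theorem con_of_unary {A : Algebra σ} (R : A.carrier → A.carrier → Prop)
    (refl : ∀ a, R a a) (trans : ∀ a b c, R a b → R b c → R a c)
    (inv : ∀ f, Un A f → ∀ a b, R a b → R (f a) (f b)) (o : σ.ops)
    (x y : Fin (σ.arity o) → A.carrier) (h : ∀ i, R (x i) (y i)) :
    R (A.interp o x) (A.interp o y) := by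
  classical
  refine one_by_one R R refl trans (fun z => A.interp o z) x y h ?_
  intro z _ i y' hy' _ _
  have := inv (fun t => A.interp o (fun j => if j = i then t else z j))
    (PolG.app o _ (fun j => by
      by_cases hj : j = i
      · simp only [hj, if_true]; exact Un.id
      · simp only [hj, if_false]; exact PolG.const _)) _ _ hy'
  convert this using 2
  all_goals
    funext j
    by_cases hj : j = i
    · subst hj; simp
    · simp [hj]

theorem cover_dich {A : Algebra σ} {γ s : Con A} (hc : Con.Covers γ s)
    (R : A.carrier → A.carrier → Prop)
    (symm : ∀ a b, R a b → R b a) (trans : ∀ a b c, R a b → R b c → R a c)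
    (inv : ∀ f, Un A f → ∀ a b, R a b → R (f a) (f b))
    (h1 : ∀ a b, γ.r a b → R a b) (h2 : ∀ a b, R a b → s.r a b)
    (hne : ∃ a b, s.r a b ∧ ¬ R a b) : ∀ a b, R a b → γ.r a b := by
  let e : Con A := ⟨R, fun a => h1 _ _ (γ.refl a), fun h => symm _ _ h, fun h h' => trans _ _ _ h h',
    con_of_unary R (fun a => h1 _ _ (γ.refl a)) trans inv⟩
  by_contra hcon
  have hlt : γ < e := ⟨h1, hcon⟩
  have := hc.2 e hlt h2
  obtain ⟨a, b, hab, hn⟩ := hne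
  apply hn
  show e.r a b
  rw [this]; exact hab

theorem exists_idem_exp (X : Type) [Finite X] :
    ∃ K : ℕ, 0 < K ∧ ∀ (h : X → X) (x : X), h^[K] (h^[K] x) = h^[K] x := by
  classical
  have each : ∀ h : X → X, ∃ m : ℕ, 0 < m ∧ ∀ x, h^[m] (h^[m] x) = h^[m] x := by
    intro h
    have : ∃ i j : ℕ, i < j ∧ h^[i] = h^[j] := by
      obtain ⟨i, j, hij, he⟩ := Finite.exists_ne_map_eq_of_infinite (fun m : ℕ => h^[m])
      rcases lt_or_gt_of_ne hij with h' | h'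
      · exact ⟨i, j, h', he⟩
      · exact ⟨j, i, h', he.symm⟩
    obtain ⟨i, j, hij, he⟩ := this
    obtain ⟨d, rfl⟩ := Nat.exists_eq_add_of_lt hij
    have per : ∀ m, i ≤ m → ∀ q, h^[m + q * (d + 1)] = h^[m] := by
      intro m hm q
      induction q with
      | zero => simp
      | succ q ih =>
        obtain ⟨r, rfl⟩ := Nat.exists_eq_add_of_le hm
        rw [show i + r + (q + 1) * (d + 1) = (r + q * (d + 1)) + (i + d + 1) by ring,
          Function.iterate_add, ← he, ← Function.iterate_add,
          show r + q * (d + 1) + i = i + r + q * (d + 1) by ring, ih]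
    refine ⟨(i + 1) * (d + 1), by positivity, fun x => ?_⟩
    rw [← Function.iterate_add_apply, per _ (by nlinarith)]
  choose m hm0 hm using each
  cases nonempty_fintype X
  refine ⟨∏ h : X → X, m h, Finset.prod_pos fun h _ => hm0 h, fun h x => ?_⟩
  obtain ⟨q, hq⟩ := Finset.dvd_prod_of_mem m (Finset.mem_univ h)
  have hq0 : q ≠ 0 := by
    rintro rfl
    have : 0 < ∏ h : X → X, m h := Finset.prod_pos fun h _ => hm0 h
    omega
  obtain ⟨q, rfl⟩ := Nat.exists_eq_succ_of_ne_zero hq0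
  have : h^[∏ h : X → X, m h] = h^[m h] := by
    rw [hq, Function.iterate_mul]
    clear hq hq0
    induction q with
    | zero => rfl
    | succ q ih =>
      rw [Function.iterate_succ', ih]
      funext x; exact hm h x
  rw [this]; exact hm h x

/-- A `(γ,s)`-minimal set. -/
structure MinSet {A : Algebra σ} (γ s : Con A) (K : ℕ) where
  U : Set A.carrier
  e : A.carrier → A.carrier
  une : Un A e
  mem : ∀ z, e z ∈ U
  fix : ∀ z ∈ U, e z = z
  u : A.carrier
  v : A.carrier
  hu : u ∈ U
  hv : v ∈ U
  huv : s.r u v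
  nuv : ¬ γ.r u v
  dens : ∀ x y, s.r x y → ¬ γ.r x y → ∃ q, Un A q ∧ (∀ z, q z ∈ U) ∧ ¬ γ.r (q x) (q y)
  min : ∀ h, Un A h → (∀ z, h z ∈ U) → ∀ x ∈ U, ∀ y ∈ U, s.r x y → ¬ γ.r (h x) (h y) →
    ∀ z ∈ U, h^[K] z = z

theorem surj_iter {X : Type} {U : Set X} {K : ℕ} {h : X → X}
    (idem : ∀ x : X, h^[K] (h^[K] x) = h^[K] x)
    (hs : ∀ z ∈ U, ∃ w ∈ U, h w = z) : ∀ z ∈ U, h^[K] z = z := by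
  have key : ∀ k : ℕ, ∀ z ∈ U, ∃ w ∈ U, h^[k] w = z := by
    intro k
    induction k with
    | zero => exact fun z hz => ⟨z, hz, rfl⟩
    | succ k ih =>
      intro z hz
      obtain ⟨w, hw, rfl⟩ := hs z hz
      obtain ⟨t, ht, rfl⟩ := ih w hw
      exact ⟨t, ht, Function.iterate_succ_apply' _ _ _⟩
  intro z hz
  obtain ⟨w, _, rfl⟩ := key K z hz
  exact idem w

theorem iter_mem {X : Type} {U : Set X} {h : X → X} (hm : ∀ z, h z ∈ U) (k : ℕ) (z : X)
    (hz : z ∈ U) : h^[k] z ∈ U := by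
  cases k with
  | zero => exact hz
  | succ k => rw [Function.iterate_succ_apply']; exact hm _

theorem exists_minSet {A : Algebra σ} [Finite A.carrier] {γ s : Con A} (hc : Con.Covers γ s)
    {K : ℕ} (hK : 0 < K) (idem : ∀ (h : A.carrier → A.carrier) x, h^[K] (h^[K] x) = h^[K] x) :
    Nonempty (MinSet γ s K) := by
  classical
  have hlt : ∃ a b, s.r a b ∧ ¬ γ.r a b := by
    have := hc.1.2
    by_contra hcon
    push Not at hcon
    exact this hcon
  let P : ℕ → Prop := fun m => ∃ f, Un A f ∧ (∃ x y, s.r x y ∧ ¬ γ.r (f x) (f y)) ∧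
    (Set.range f).ncard = m
  have hP : ∃ m, P m := by
    obtain ⟨a, b, h1, h2⟩ := hlt
    exact ⟨_, fun x => x, Un.id, ⟨a, b, h1, h2⟩, rfl⟩
  obtain ⟨f, hf, ⟨x, y, hxy, hn⟩, hcard⟩ := Nat.find_spec hP
  have hmin : ∀ h, Un A h → (∃ x y, s.r x y ∧ ¬ γ.r (h x) (h y)) → (∀ z, h z ∈ Set.range f) →
      ∀ z ∈ Set.range f, ∃ w, h w = z := by
    intro h hh hx hr
    have hsub : Set.range h ⊆ Set.range f := by rintro _ ⟨z, rfl⟩; exact hr z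
    have : Set.range h = Set.range f := by
      apply Set.eq_of_subset_of_ncard_le hsub _ (Set.toFinite _)
      rw [hcard]
      exact Nat.find_min' hP ⟨h, hh, hx, rfl⟩
    intro z hz
    rw [← this] at hz
    exact hz
  have dens : ∀ x y, s.r x y → ¬ γ.r x y →
      ∃ q, Un A q ∧ (∀ z, q z ∈ Set.range f) ∧ ¬ γ.r (q x) (q y) := by
    have := cover_dich hc (fun a b => s.r a b ∧ ∀ q, Un A q → (∀ z, q z ∈ Set.range f) →
        γ.r (q a) (q b))
      (fun a b h => ⟨s.symm h.1, fun q h1 h2 => γ.symm (h.2 q h1 h2)⟩)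
      (fun a b c h h' => ⟨s.trans h.1 h'.1, fun q h1 h2 => γ.trans (h.2 q h1 h2) (h'.2 q h1 h2)⟩)
      (fun p hp a b h => ⟨hp.con s h.1, fun q h1 h2 =>
        h.2 (fun x => q (p x)) (Un.pol h1 hp) (fun z => h2 _)⟩)
      (fun a b h => ⟨hc.1.1 _ _ h, fun q h1 _ => h1.con γ h⟩)
      (fun a b h => h.1)
      ⟨x, y, hxy, fun h => hn (h.2 f hf (fun z => ⟨z, rfl⟩))⟩
    intro a b hab hn
    by_contra hcon
    push Not at hcon
    exact hn (this a b ⟨hab, hcon⟩)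
  obtain ⟨g, hg, hgr, hgn⟩ := dens (f x) (f y) (hf.con s hxy) hn
  have hgs : ∀ z ∈ Set.range f, ∃ w ∈ Set.range f, g w = z := by
    intro z hz
    obtain ⟨w, hw⟩ := hmin (fun x => g (f x)) (Un.pol hg hf) ⟨x, y, hxy, hgn⟩ (fun z => hgr _) z hz
    exact ⟨f w, ⟨w, rfl⟩, hw⟩
  have hfix := surj_iter (idem g) hgs
  have hmem : ∀ z, g^[K] z ∈ Set.range f := by
    intro z
    obtain ⟨k, rfl⟩ := Nat.exists_eq_succ_of_ne_zero hK.ne'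
    rw [Function.iterate_succ_apply']; exact hgr _
  refine ⟨⟨Set.range f, g^[K], hg.iter K, hmem, hfix, f x, f y, ⟨x, rfl⟩, ⟨y, rfl⟩,
    hf.con s hxy, hn, dens, ?_⟩⟩
  intro h hh hhr a ha b hb hab hnab
  refine surj_iter (idem h) ?_
  intro z hz
  obtain ⟨w, hw⟩ := hmin (fun x => h (g^[K] x)) (Un.pol hh (hg.iter K))
    ⟨a, b, hab, by rw [hfix a ha, hfix b hb]; exact hnab⟩ (fun z => hhr _) z hz
  exact ⟨_, hmem w, hw⟩

/-- Cubes of elements. -/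
inductive Cube {A : Algebra σ} (s : Con A) (n : ℕ) : ((Fin n → Bool) → A.carrier) → Prop
  | gen (i : Fin n) (a b : A.carrier) : s.r a b → Cube s n (fun ε => if ε i then b else a)
  | app (o : σ.ops) (f : Fin (σ.arity o) → (Fin n → Bool) → A.carrier) :
      (∀ j, Cube s n (f j)) → Cube s n (fun ε => A.interp o (fun j => f j ε))

theorem cube_cent {A : Algebra σ} [Finite A.carrier] {s δ : Con A} {n : ℕ}
    (hC : Centralizes (fun _ : Fin n => s) s δ) (w : (Fin (n + 1) → Bool) → A.carrier)
    (hw : Cube s (n + 1) w)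
    (h : ∀ ε : Fin n → Bool, ε ≠ (fun _ => true) →
      δ.r (w (Fin.lastCases (motive := fun _ => Bool) false ε))
        (w (Fin.lastCases (motive := fun _ => Bool) true ε))) :
    δ.r (w (Fin.lastCases (motive := fun _ => Bool) false fun _ => true))
      (w (Fin.lastCases (motive := fun _ => Bool) true fun _ => true)) := by
  classical
  let I := Fin (n + 1) × {p : A.carrier × A.carrier // s.r p.1 p.2}
  obtain ⟨N, ⟨E⟩⟩ := Finite.exists_equiv_fin I
  let g : Fin N → Fin (n + 1) := fun i => (E.symm i).1
  let a : Fin N → A.carrier := fun i => (E.symm i).2.1.1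
  let b : Fin N → A.carrier := fun i => (E.symm i).2.1.2
  have key : ∃ p : (Fin N → A.carrier) → A.carrier, IsPolynomial A p ∧
      ∀ ε, p (chooseVec g a b ε) = w ε := by
    clear h
    induction hw with
    | gen i x y hxy =>
      refine ⟨fun z => z (E (i, ⟨(x, y), hxy⟩)), IsPolynomial.proj _, fun ε => ?_⟩
      simp [chooseVec, g, a, b]
    | app o f _ ih =>
      choose p hp hpe using ih
      refine ⟨_, IsPolynomial.app o p hp, fun ε => ?_⟩
      simp only [hpe]
  obtain ⟨p, hp, hpe⟩ := key
  have := hC N p hp g a b (by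
    intro i
    have hs := (E.symm i).2.2
    have : (Fin.lastCases (motive := fun _ => Con A) s (fun _ => s) (g i)) = s := by
      cases g i using Fin.lastCases <;> simp
    rw [this]; exact hs) (by simpa only [hpe] using h)
  simpa only [hpe] using this

theorem Tw.cube {A : Algebra σ} {s : Con A} {n : ℕ} {φ ψ : A.carrier → A.carrier}
    (h : Tw s φ ψ) (i : Fin n) {w : (Fin n → Bool) → A.carrier} (hw : Cube s n w) :
    Cube s n (fun ε => if ε i then φ (w ε) else ψ (w ε)) := by
  induction h with
  | id => simpa using hw
  | const a b h => exact Cube.gen i b a (s.symm h)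
  | app o f g _ ih =>
    have := Cube.app o _ ih
    convert this using 1
    funext ε
    cases ε i <;> simp

theorem no_twin {A : Algebra σ} [Finite A.carrier] {s δ : Con A} {n : ℕ}
    (hC : Centralizes (fun _ : Fin n => s) s δ) {φ ψ : A.carrier → A.carrier}
    (h : Tw s φ ψ) (c d : A.carrier) (hd : ψ c = d) (hdd : ψ d = d) (hc : φ c = c)
    (hd' : φ d = d) : δ.r c d := by
  classical
  have hcd : s.r c d := by have := h.rel c; rwa [hc, hd] at this
  let B : (Fin (n + 1) → Bool) → A.carrier := fun ε => if ε (Fin.last n) then d else c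
  let W : List (Fin n) → (Fin (n + 1) → Bool) → A.carrier := fun l ε =>
    l.foldr (fun i acc => if ε i.castSucc then φ acc else ψ acc) (B ε)
  have hW : ∀ l, Cube s (n + 1) (W l) := by
    intro l
    induction l with
    | nil => exact Cube.gen _ _ _ hcd
    | cons i l ih => exact Tw.cube h i.castSucc ih
  have hv : ∀ (ε : Fin n → Bool) (l : List (Fin n)),
      let x := W l (Fin.lastCases (motive := fun _ => Bool) false ε)
      let y := W l (Fin.lastCases (motive := fun _ => Bool) true ε)
      x = y ∧ (∃ i ∈ l, ε i = false) ∨ (x = c ∧ y = d ∧ ∀ i ∈ l, ε i = true) := by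
    intro ε l
    induction l with
    | nil => right; simp [W, B]
    | cons i l ih =>
      simp only [W, List.foldr_cons, Fin.lastCases_castSucc] at ih ⊢
      rcases ih with ⟨h1, j, hj, hj'⟩ | ⟨h1, h2, h3⟩
      · left
        refine ⟨by rw [h1], j, List.mem_cons_of_mem _ hj, hj'⟩
      · rw [h1, h2]
        cases hi : ε i
        · left; refine ⟨by simp [hd, hdd], i, by simp, hi⟩
        · right; simp [hc, hd', hi]; exact h3
  have := cube_cent hC (W (List.finRange n)) (hW _) (by
    intro ε hε
    rcases hv ε (List.finRange n) with ⟨h1, _⟩ | ⟨_, _, h3⟩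
    · rw [h1]; exact δ.refl _
    · exact absurd (funext fun i => h3 i (List.mem_finRange i)) hε)
  rcases hv (fun _ => true) (List.finRange n) with ⟨_, i, _, hi⟩ | ⟨h1, h2, _⟩
  · simp at hi
  · rwa [h1, h2] at this

theorem cent_mono {A : Algebra σ} {s β δ : Con A} {n : ℕ} (hs : s ≤ β)
    (hC : Centralizes (fun _ : Fin n => β) β δ) : Centralizes (fun _ : Fin n => s) s δ := by
  intro N p hp g a b hab
  refine hC N p hp g a b (fun i => ?_)
  have := hab i
  cases h : g i using Fin.lastCases <;> rw [h] at this <;> simp at this ⊢ <;> exact hs _ _ this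

theorem cent_comm {A : Algebra σ} {β : Con A} {n : ℕ} :
    Centralizes (fun _ : Fin n => β) β (commutator (fun _ : Fin n => β) β) := by
  intro N p hp g a b hab h δ hδ
  exact hδ N p hp g a b hab (fun ε hε => h ε hε δ hδ)

/-- Twin lemma: twin polynomials into a minimal set are simultaneously permutations. -/
theorem twin_lemma {A : Algebra σ} [Finite A.carrier] {γ s δ : Con A} {n K : ℕ}
    (idem : ∀ (h : A.carrier → A.carrier) x, h^[K] (h^[K] x) = h^[K] x)
    (M : MinSet γ s K) (hC : Centralizes (fun _ : Fin n => s) s δ) (hδ : δ ≤ γ)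
    {φ ψ : A.carrier → A.carrier} (h : Tw s φ ψ) (hψ : ∀ z, ψ z ∈ M.U)
    (hp : ∀ z ∈ M.U, φ^[K] z = z) : ∀ z ∈ M.U, ψ^[K] z = z := by
  have hall : ∀ c ∈ M.U, γ.r c (ψ^[K] c) := fun c hc =>
    hδ _ _ (no_twin hC (h.iter K) c (ψ^[K] c) rfl (idem ψ c) (hp c hc)
      (hp _ (iter_mem hψ K c hc)))
  by_contra hcon
  have hcol : γ.r (ψ M.u) (ψ M.v) := by
    by_contra hn
    exact hcon (M.min ψ h.right hψ _ M.hu _ M.hv M.huv hn)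
  have : γ.r (ψ^[K] M.u) (ψ^[K] M.v) := by
    cases K with
    | zero => exact absurd (fun z _ => rfl) hcon
    | succ k =>
      rw [Function.iterate_succ_apply, Function.iterate_succ_apply]
      exact (h.right.iter k).con γ hcol
  exact M.nuv (γ.trans (hall _ M.hu) (γ.trans this (γ.symm (hall _ M.hv))))

theorem perm_reflect {A : Algebra σ} {γ : Con A} {K : ℕ} (hK : 0 < K) {U : Set A.carrier}
    {h : A.carrier → A.carrier} (hh : Un A h) (hp : ∀ z ∈ U, h^[K] z = z) {x y : A.carrier}
    (hx : x ∈ U) (hy : y ∈ U) (hxy : γ.r (h x) (h y)) : γ.r x y := by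
  obtain ⟨k, rfl⟩ := Nat.exists_eq_succ_of_ne_zero hK.ne'
  have := (hh.iter k).con γ hxy
  rwa [← Function.iterate_succ_apply, ← Function.iterate_succ_apply, hp x hx, hp y hy] at this

/-- Single-variable steps between unary polynomials. -/
def Step {A : Algebra σ} (s : Con A) (φ ψ : A.carrier → A.carrier) : Prop :=
  ∃ h, Bin A h ∧ ∃ y y', s.r y y' ∧ φ = (fun x => h x y) ∧ ψ = (fun x => h x y')

theorem tw_chain {A : Algebra σ} {s : Con A} {φ ψ : A.carrier → A.carrier} (h : Tw s φ ψ) :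
    Relation.ReflTransGen (Step s) φ ψ := by
  classical
  induction h with
  | id => exact Relation.ReflTransGen.refl
  | const a b h =>
    exact Relation.ReflTransGen.single ⟨fun _ y => y, Bin.snd, a, b, h, rfl, rfl⟩
  | app o f g hfg ih =>
    refine one_by_one (Relation.ReflTransGen (Step s)) (Relation.ReflTransGen (Step s))
      (fun _ => Relation.ReflTransGen.refl) (fun _ _ _ h h' => h.trans h')
      (fun (z : Fin (σ.arity o) → A.carrier → A.carrier) x => A.interp o (fun j => z j x))
      f g ih ?_
    intro z hz i y' hy' _ _
    have hzu : ∀ j, Un A (z j) := by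
      intro j
      rcases hz j with h | h <;> rw [h]
      · exact (hfg j).left
      · exact (hfg j).right
    have := Relation.ReflTransGen.lift (r := Step s) (p := Step s)
      (fun (t : A.carrier → A.carrier) x =>
        A.interp o (fun j => if j = i then t x else z j x)) (by
      rintro _ _ ⟨h, hh, y, y', hyy, rfl, rfl⟩
      refine ⟨fun x y => A.interp o (fun j => if j = i then h x y else z j x), ?_, y, y', hyy,
        rfl, rfl⟩
      refine PolG.app o (fun j (p : A.carrier × A.carrier) => if j = i then h p.1 p.2 else z j p.1) (fun j => ?_)
      by_cases hj : j = i
      · simp only [hj, if_true]; exact hh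
      · simp only [hj, if_false]; exact Un.pol (hzu j) Bin.fst) _ _ hy'
    convert this using 1
    all_goals
      funext x
      congr 1
      funext j
      by_cases hj : j = i
      · subst hj; simp
      · simp [hj]

theorem core {A : Algebra σ} {γ s : Con A} {K : ℕ} (hc : Con.Covers γ s) (hK : 0 < K)
    (M : MinSet γ s K)
    (twin : ∀ {φ ψ : A.carrier → A.carrier}, Tw s φ ψ → (∀ z, ψ z ∈ M.U) →
      (∀ z ∈ M.U, φ^[K] z = z) → ∀ z ∈ M.U, ψ^[K] z = z)
    {u v : A.carrier} (hu : u ∈ M.U) (hv : v ∈ M.U) (huv : s.r u v) (nuv : ¬ γ.r u v)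
    {φ ψ : A.carrier → A.carrier} (h : Tw s φ ψ)
    (h1 : γ.r (φ u) (ψ u)) (h2 : ¬ γ.r (φ v) (ψ v)) : False := by
  obtain ⟨k, hk⟩ := Nat.exists_eq_succ_of_ne_zero hK.ne'
  -- move into the minimal set
  obtain ⟨q, hq, hqU, hqn⟩ := M.dens _ _ (h.rel v) h2
  replace h := hq.tw h
  replace h1 := hq.con γ h1
  obtain ⟨φ, hφ⟩ : ∃ φ', φ' = fun x => q (φ x) := ⟨_, rfl⟩
  obtain ⟨ψ, hψ⟩ : ∃ ψ', ψ' = fun x => q (ψ x) := ⟨_, rfl⟩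
  rw [← hφ, ← hψ] at h
  have e1 : γ.r (φ u) (ψ u) := by rw [hφ, hψ]; exact h1
  have e2 : ¬ γ.r (φ v) (ψ v) := by rw [hφ, hψ]; exact hqn
  have φU : ∀ z, φ z ∈ M.U := by rw [hφ]; exact fun z => hqU _
  have ψU : ∀ z, ψ z ∈ M.U := by rw [hψ]; exact fun z => hqU _
  clear h1 h2 hqn hφ hψ
  have φp : ∀ z ∈ M.U, φ^[K] z = z := by
    by_cases hn : γ.r (φ u) (φ v)
    · refine twin h.symm φU (M.min ψ h.right ψU u hu v hv huv fun hn' => e2 ?_)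
      exact γ.trans (γ.symm hn) (γ.trans e1 hn')
    · exact M.min φ h.left φU u hu v hv huv hn
  -- normalise `φ` to the identity
  have inv : ∀ {η : A.carrier → A.carrier}, Un A η → (∀ z ∈ M.U, η^[K] z = z) → ∀ {x y},
      x ∈ M.U → y ∈ M.U → γ.r (η^[k] x) (η^[k] y) → γ.r x y := by
    intro η hη hp x y hx hy hxy
    have := hη.con γ hxy
    rwa [← Function.iterate_succ_apply' η, ← Function.iterate_succ_apply' η, ← hk,
      hp x hx, hp y hy] at this
  have h' : Tw s (fun x => φ^[k] (φ x)) (fun x => φ^[k] (ψ x)) := (h.left.iter k).tw h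
  have φ'id : ∀ z ∈ M.U, φ^[k] (φ z) = z := by
    intro z hz
    rw [← Function.iterate_succ_apply, ← hk, φp z hz]
  have ψ'U : ∀ z, φ^[k] (ψ z) ∈ M.U := fun z => iter_mem φU k _ (ψU z)
  have f1 : γ.r (φ^[k] (ψ u)) u := by
    have := (h.left.iter k).con γ e1
    rw [φ'id u hu] at this
    exact γ.symm this
  have f2 : ¬ γ.r (φ^[k] (ψ v)) v := by
    intro hn
    rw [← φ'id v hv] at hn
    rw [φ'id v hv] at hn
    apply e2
    refine γ.symm (inv h.left φp (ψU v) (φU v) ?_)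
    rw [φ'id v hv]; exact hn
  -- the binary polynomial
  have ex : ∃ g, Bin A g ∧ (∀ x y, g x y ∈ M.U) ∧ (∀ z ∈ M.U, (fun x => g x u)^[K] z = z) ∧
      ¬ γ.r (g v u) (g v v) := by
    by_contra hcon
    push Not at hcon
    have secTw : ∀ g, Bin A g → ∀ y y', s.r y y' → Tw s (fun x => g x y) (fun x => g x y') :=
      fun g hg y y' hy => hg.tw Tw.id (Tw.const _ _ hy)
    have := cover_dich hc (fun y y' => s.r y y' ∧ ∀ g, Bin A g → (∀ x y, g x y ∈ M.U) →
        (∀ z ∈ M.U, (fun x => g x y)^[K] z = z) → γ.r (g v y) (g v y'))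
      (fun a b hab => ⟨s.symm hab.1, fun g hg hgU hp =>
        γ.symm (hab.2 g hg hgU (twin (secTw g hg _ _ (s.symm hab.1)) (fun z => hgU _ _) hp))⟩)
      (fun a b c hab hbc => ⟨s.trans hab.1 hbc.1, fun g hg hgU hp =>
        γ.trans (hab.2 g hg hgU hp)
          (hbc.2 g hg hgU (twin (secTw g hg _ _ hab.1) (fun z => hgU _ _) hp))⟩)
      (fun p hup a b hab => ⟨hup.con s hab.1, fun g hg hgU hp =>
        hab.2 (fun x y => g x (p y)) (hg.pol Bin.fst (hup.pol Bin.snd)) (fun x y => hgU _ _) hp⟩)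
      (fun a b hab => ⟨hc.1.1 _ _ hab, fun g hg _ _ =>
        Un.con (f := fun y => g v y) (hg.pol (PolG.const v) Un.id) γ hab⟩)
      (fun a b hab => hab.1)
    by_cases hall : ∃ a b, s.r a b ∧ ¬ (s.r a b ∧ ∀ g, Bin A g → (∀ x y, g x y ∈ M.U) →
        (∀ z ∈ M.U, (fun x => g x a)^[K] z = z) → γ.r (g v a) (g v b))
    · exact nuv (this hall u v ⟨huv, fun g hg hgU hp => hcon g hg hgU hp⟩)
    · push Not at hall
      have chain := tw_chain h
      have : ∀ η, Relation.ReflTransGen (Step s) φ η →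
          (∀ z ∈ M.U, (fun x => M.e (η x))^[K] z = z) ∧ γ.r (φ v) (M.e (η v)) := by
        intro η hη
        induction hη with
        | refl =>
          have : (fun x => M.e (φ x)) = φ := funext fun x => M.fix _ (φU x)
          refine ⟨by rw [this]; exact φp, ?_⟩
          rw [M.fix _ (φU v)]; exact γ.refl _
        | tail _ st ih =>
          obtain ⟨g, hg, y, y', hy, rfl, rfl⟩ := st
          have hg' : Bin A (fun x y => M.e (g x y)) := M.une.pol hg
          refine ⟨twin (secTw _ hg' y y' hy) (fun z => M.mem _) ih.1, γ.trans ih.2 ?_⟩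
          exact (hall y y' hy).2 _ hg' (fun _ _ => M.mem _) ih.1
      have := (this ψ chain).2
      rw [M.fix _ (ψU v)] at this
      exact e2 this
  obtain ⟨g₀, hg₀, g₀U, g₀p, g₀n⟩ := ex
  have ung : Un A (fun x => g₀ x u) := hg₀.pol Un.id (PolG.const u)
  obtain ⟨g, hgdef⟩ : ∃ g : A.carrier → A.carrier → A.carrier,
      g = fun x y => (fun x => g₀ x u)^[k] (g₀ x y) := ⟨_, rfl⟩
  have hg : Bin A g := by rw [hgdef]; exact (ung.iter k).pol hg₀
  have gU : ∀ x y, g x y ∈ M.U := by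
    intro x y; rw [hgdef]; exact iter_mem (fun z => g₀U _ _) k _ (g₀U _ _)
  have gid : ∀ x ∈ M.U, g x u = x := by
    intro x hx
    rw [hgdef]
    show (fun x => g₀ x u)^[k] ((fun x => g₀ x u) x) = x
    rw [← Function.iterate_succ_apply, ← hk, g₀p x hx]
  have gn : ¬ γ.r (g v u) (g v v) := by
    intro hn
    rw [hgdef] at hn
    exact g₀n (inv ung g₀p (g₀U _ _) (g₀U _ _) hn)
  have gl : ∀ y, s.r u y → ∀ z ∈ M.U, (fun x => g x y)^[K] z = z := by
    intro y hy
    refine twin (hg.tw Tw.id (Tw.const u y hy)) (fun z => gU _ _) ?_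
    intro z hz
    have : ∀ m : ℕ, (fun x => g x u)^[m] z = z := by
      intro m
      induction m with
      | zero => rfl
      | succ m ih => rw [Function.iterate_succ_apply', ih]; exact gid z hz
    exact this K
  have gr : ∀ x, s.r v x → ∀ z ∈ M.U, (fun y => g x y)^[K] z = z := by
    intro x hx
    refine twin (hg.tw (Tw.const v x hx) Tw.id) (fun z => gU _ _) ?_
    exact M.min (fun y => g v y) (hg.pol (PolG.const v) Un.id) (fun z => gU _ _) u hu v hv huv gn
  -- the inversion
  obtain ⟨ρ, hρdef⟩ : ∃ ρ : A.carrier → A.carrier,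
      ρ = fun y => (fun x => g x y)^[k] u := ⟨_, rfl⟩
  have hρ : Un A ρ := by rw [hρdef]; exact hg.iter u k
  have ρu : ρ u = u := by
    rw [hρdef]
    have : ∀ m : ℕ, (fun x => g x u)^[m] u = u := by
      intro m
      induction m with
      | zero => rfl
      | succ m ih => rw [Function.iterate_succ_apply', ih]; exact gid u hu
    exact this k
  have ρs : ∀ y, s.r u y → s.r u (ρ y) := by
    intro y hy
    have := hρ.con s hy
    rwa [ρu] at this
  have ρg : ∀ y, s.r u y → g (ρ y) y = u := by
    intro y hy
    rw [hρdef]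
    show (fun x => g x y) ((fun x => g x y)^[k] u) = u
    have := gl y hy u hu
    rw [hk, Function.iterate_succ_apply'] at this
    exact this
  -- the subtraction `t x y = g (ρ y) x`
  have ht : Bin A (fun x y => g (ρ y) x) := hg.pol (hρ.pol Bin.snd) Bin.fst
  have T : Tw s (fun x => g (ρ x) (φ^[k] (φ x))) (fun x => g (ρ x) (φ^[k] (ψ x))) :=
    ht.tw h' Tw.id
  have c1 : γ.r (g (ρ u) (φ^[k] (ψ u))) u := by
    have := Un.con (f := fun y => g (ρ u) y) (hg.pol (PolG.const _) Un.id) γ f1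
    rwa [ρg u (s.refl u)] at this
  have c2 : ¬ γ.r (g (ρ v) (φ^[k] (ψ v))) u := by
    intro hn
    apply f2
    refine perm_reflect hK (h := fun y => g (ρ v) y) (hg.pol (PolG.const _) Un.id)
      (gr (ρ v) (s.trans (s.symm huv) (ρs v huv))) (ψ'U v) hv ?_
    show γ.r (g (ρ v) (φ^[k] (ψ v))) (g (ρ v) v)
    rw [ρg v huv]; exact hn
  have P2 := M.min _ T.right (fun z => gU _ _) u hu v hv huv
    (fun hn => c2 (γ.trans (γ.symm hn) c1))
  have P1 := twin T.symm (fun z => gU _ _) P2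
  apply nuv
  refine perm_reflect hK T.left P1 hu hv ?_
  show γ.r (g (ρ u) (φ^[k] (φ u))) (g (ρ v) (φ^[k] (φ v)))
  rw [φ'id u hu, φ'id v hv, ρg u (s.refl u), ρg v huv]
  exact γ.refl u

theorem polG_of_isPolynomial {A : Algebra σ} {n : ℕ} {p : (Fin n → A.carrier) → A.carrier}
    (hp : IsPolynomial A p) : PolG A (fun h => ∃ i, h = fun x => x i) p := by
  induction hp with
  | proj i => exact PolG.gen _ ⟨i, rfl⟩
  | const a => exact PolG.const a
  | app o g _ ih => exact PolG.app o g ih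

/-- Proposition 4.3 of "On Supernilpotent Algebras": in a finite algebra, every
cover inside an `n`-supernilpotent interval of the congruence lattice is abelian. -/
theorem finite_supernilpotent_interval_covers_abelian {σ : Signature} (A : Algebra σ)
    (hfin : Finite A.carrier) (n : ℕ) (hn : 2 ≤ n)
    (α β : Con A) (hab : α ≤ β) (hsn : nfold β n ≤ α) :
    ∀ γ s : Con A, α ≤ γ → Con.Covers γ s → s ≤ β →
      Centralizes (fun _ : Fin 1 => s) s γ := by
  classical
  intro γ s hαγ hc hsβ
  have := hfin
  obtain ⟨K, hK, idem⟩ := exists_idem_exp A.carrier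
  obtain ⟨M⟩ := exists_minSet hc hK idem
  obtain ⟨m, rfl⟩ := Nat.exists_eq_add_of_le hn
  -- the commutator of `β`
  obtain ⟨m', δ, hδC, hδγ⟩ : ∃ (m' : ℕ) (δ : Con A),
      Centralizes (fun _ : Fin m' => s) s δ ∧ δ ≤ γ := by
    have e : 2 + m = m + 2 := by omega
    rw [e] at hsn
    refine ⟨m + 1, commutator (fun _ : Fin (m + 1) => β) β, cent_mono hsβ cent_comm, ?_⟩
    intro a b hab'
    exact hαγ _ _ (hsn a b hab')
  have twin : ∀ {φ ψ : A.carrier → A.carrier}, Tw s φ ψ → (∀ z, ψ z ∈ M.U) →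
      (∀ z ∈ M.U, φ^[K] z = z) → ∀ z ∈ M.U, ψ^[K] z = z :=
    fun h h1 h2 => twin_lemma idem M hδC hδγ h h1 h2
  by_contra hcon
  have dich := cover_dich hc (fun x y => s.r x y ∧ ∀ φ ψ, Tw s φ ψ →
      (γ.r (φ x) (ψ x) ↔ γ.r (φ y) (ψ y)))
    (fun a b h => ⟨s.symm h.1, fun φ ψ t => (h.2 φ ψ t).symm⟩)
    (fun a b c h h' => ⟨s.trans h.1 h'.1, fun φ ψ t => (h.2 φ ψ t).trans (h'.2 φ ψ t)⟩)
    (fun f hf a b h => ⟨hf.con s h.1, fun φ ψ t => h.2 _ _ (t.comp hf.tw_self)⟩)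
    (fun a b h => ⟨hc.1.1 _ _ h, fun φ ψ t =>
      ⟨fun h' => γ.trans (γ.symm (t.left.con γ h)) (γ.trans h' (t.right.con γ h)),
       fun h' => γ.trans (t.left.con γ h) (γ.trans h' (γ.symm (t.right.con γ h)))⟩⟩)
    (fun a b h => h.1)
  by_cases hex : ∃ a b, s.r a b ∧ ¬ (s.r a b ∧ ∀ φ ψ, Tw s φ ψ →
      (γ.r (φ a) (ψ a) ↔ γ.r (φ b) (ψ b)))
  · have hn : ¬ (s.r M.u M.v ∧ ∀ φ ψ, Tw s φ ψ →
        (γ.r (φ M.u) (ψ M.u) ↔ γ.r (φ M.v) (ψ M.v))) := fun h => M.nuv (dich hex _ _ h)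
    apply hn
    refine ⟨M.huv, fun φ ψ t => ⟨fun h1 => ?_, fun h1 => ?_⟩⟩
    · by_contra h2
      exact core hc hK M twin M.hu M.hv M.huv M.nuv t h1 h2
    · by_contra h2
      exact core hc hK M twin M.hv M.hu (s.symm M.huv) (fun h => M.nuv (γ.symm h)) t h1 h2
  · push Not at hex
    apply hcon
    intro N p hp g a b hab' hyp
    have hs : ∀ i, s.r (a i) (b i) := by
      intro i
      have := hab' i
      have e : (Fin.lastCases (motive := fun _ => Con A) s (fun _ : Fin 1 => s) (g i)) = s := by
        cases g i using Fin.lastCases with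
        | last => exact Fin.lastCases_last
        | cast j => exact Fin.lastCases_castSucc _
      rwa [e] at this
    have h0 := hyp (fun _ => false) (by intro h; simpa using congrFun h 0)
    have hP := polG_of_isPolynomial hp
    let C : (Fin N → A.carrier) → (Fin N → A.carrier) → Fin N → A.carrier :=
      fun z w i => if g i = Fin.last 1 then w i else z i
    have key := one_by_one (fun x y => s.r x y) (fun P Q : Prop => P → Q) (fun _ h => h)
      (fun _ _ _ h h' h'' => h' (h h''))
      (fun z : Fin N → A.carrier => γ.r (p (C z a)) (p (C z b))) a b hs (by
        intro z _ i y' hy' _ _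
        let D : (Fin N → A.carrier) → A.carrier → Fin N → A.carrier :=
          fun w x => C (fun j => if j = i then x else z j) w
        have hT : Tw s (fun x => p (D a x)) (fun x => p (D b x)) := by
          refine PolG.tw (D a) (D b) hP ?_
          rintro _ ⟨j, rfl⟩
          by_cases hj : g j = Fin.last 1
          · simp only [D, C, hj, if_true]; exact Tw.const _ _ (hs j)
          · by_cases hji : j = i
            · subst hji
              simp only [D, C, hj, if_false, if_true]
              exact Tw.id
            · simp only [D, C, hj, if_false, hji]; exact Tw.const _ _ (s.refl _)
        have hz : (fun j => if j = i then z i else z j) = z := by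
          funext j
          by_cases hji : j = i
          · subst hji; simp
          · simp [hji]
        have := ((hex _ _ hy').2 _ _ hT).1
        simp only [D, hz] at this
        convert this using 6)
    have c1 : ∀ x y, chooseVec g a b (Fin.lastCases (motive := fun _ => Bool) y (fun _ : Fin 1 => x))
        = C (if x then b else a) (if y then b else a) := by
      intro x y
      funext i
      simp only [chooseVec, C]
      cases h : g i using Fin.lastCases with
      | last =>
        simp only [Fin.lastCases_last, if_true]
        cases y <;> simp
      | cast j =>
        have : j.castSucc ≠ Fin.last 1 := Fin.castSucc_lt_last j |>.ne
        simp only [Fin.lastCases_castSucc, this, if_false]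
        cases x <;> simp
    rw [c1, c1] at h0 ⊢
    simpa using key (by simpa using h0)

end UA
end
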